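/- Let g ∈ H²(Ω) with Ω = ℝ⁺ × 𝕋². Then there exists a constant C > 0 (independent of g) such that ‖g‖_{L^∞(Ω)} ≤ √2 ‖g‖_{L²(Ω)}^{1/2} ‖∇g‖_{L²(Ω)}^{1/2} + C ‖∇g‖_{L²(Ω)}^{1/2} ‖∇²g‖_{L²(Ω)}^{1/2}. -/

import Mathlib

open MeasureTheory Set

noncomputable section

/-- Ambient space `ℝ³` (coordinates: `x 0` normal direction, `x 1, x 2` periodic). -/
abbrev E3 := EuclideanSpace ℝ (Fin 3)

/-- Coordinate unit vectors. -/
noncomputable def e (i : Fin 3) : E3 := EuclideanSpace.single i 1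

/-- The domain `Ω = ℝ⁺ × 𝕋²`, realized as a half-line times a fundamental square. -/
def Omega : Set E3 := {x | 0 < x 0 ∧ x 1 ∈ Ico (0 : ℝ) 1 ∧ x 2 ∈ Ico (0 : ℝ) 1}

/-!
Let `M` be the mean of `‖g‖` over the horizontal slice `{x₀} × 𝕋²` through `x`. Integrating
`‖g‖²` along the normal direction from the slice to infinity and applying the Cauchy–Schwarz
inequality bounds `M` by `√2 ‖g‖^{1/2} ‖∇g‖^{1/2}`, so it remains to bound the oscillation of `g`
on the slice, that is, the differences `d = g(· + v) - g` with `v` horizontal.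

By periodicity `d` has mean zero over the unit cube `x + Q`, hence `d x` is the average over
`z ∈ Q` of `d x - d (x + z)`. On each segment from `x` to `x + z` the first derivative is used
beyond the parameter `ρ²` and a Taylor estimate with the second derivative before it. Rescaling
`x + sQ` costs a factor `s^{-3/2}` in the `L²` bounds, which is integrable at `0` once multiplied by
the Taylor weight `s`, and the result is `|d x| ≲ A / ρ + B ρ` with `A ≲ ‖∇g‖` and `B ≲ ‖∇²g‖`.
Since `∇d` is a difference of values of `∇g`, it is also controlled by `∇²g`, so `A ≤ B` may be
assumed; then the optimal `ρ = √(A / B)` is at most `1`, as the segments require.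
-/

section L2

variable {X F G : Type*} [MeasurableSpace X] {μ : Measure X} [NormedAddCommGroup F]
  [NormedAddCommGroup G]

/-- The `L²(μ)` norm of `f`, as a real number. It takes the junk value `0` when `‖f‖ ^ 2` is not
integrable, so it is used together with `MemLp f 2 μ`. -/
def l2Norm (μ : Measure X) (f : X → F) : ℝ := √(∫ x, ‖f x‖ ^ 2 ∂μ)

lemma l2Norm_nonneg (f : X → F) : 0 ≤ l2Norm μ f := Real.sqrt_nonneg _

lemma integral_norm_mul_norm_le_l2Norm_mul_l2Norm {f : X → F} {g : X → G} (hf : MemLp f 2 μ)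
    (hg : MemLp g 2 μ) : ∫ x, ‖f x‖ * ‖g x‖ ∂μ ≤ l2Norm μ f * l2Norm μ g := by
  have holder := integral_mul_le_Lp_mul_Lq_of_nonneg Real.HolderConjugate.two_two
    (.of_forall fun x => norm_nonneg (f x)) (.of_forall fun x => norm_nonneg (g x))
    (by simpa using hf.norm) (by simpa using hg.norm)
  simpa only [l2Norm, Real.sqrt_eq_rpow, Real.rpow_two] using holder

lemma integral_norm_le_l2Norm [IsProbabilityMeasure μ] {f : X → F} (hf : MemLp f 2 μ) :
    ∫ x, ‖f x‖ ∂μ ≤ l2Norm μ f := by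
  simpa [l2Norm] using
    integral_norm_mul_norm_le_l2Norm_mul_l2Norm hf (memLp_const (1 : ℝ) : MemLp _ 2 μ)

end L2

section BoundedSets

variable {X F : Type*} [MetricSpace X] [ProperSpace X] [MeasurableSpace X] [BorelSpace X]
  [NormedAddCommGroup F] {μ : Measure X} [IsFiniteMeasureOnCompacts μ] {s : Set X}

lemma integrableOn_of_continuous_of_isBounded {f : X → F} (hf : Continuous f)
    (hs : Bornology.IsBounded s) : IntegrableOn f s μ :=
  (hf.continuousOn.integrableOn_compact hs.isCompact_closure).mono_set subset_closure

omit [IsFiniteMeasureOnCompacts μ] in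
lemma memLp_two_restrict_of_continuous {f : X → F} (hf : Continuous f)
    (hint : IntegrableOn (fun x => ‖f x‖ ^ 2) s μ) : MemLp f 2 (μ.restrict s) :=
  (memLp_two_iff_integrable_sq_norm hf.aestronglyMeasurable).2 hint

lemma memLp_two_restrict_of_continuous_of_isBounded {f : X → F} (hf : Continuous f)
    (hs : Bornology.IsBounded s) : MemLp f 2 (μ.restrict s) :=
  memLp_two_restrict_of_continuous hf
    (integrableOn_of_continuous_of_isBounded (hf.norm.pow 2) hs)

lemma setIntegral_intervalIntegral_le {ψ : X → ℝ → ℝ} (hψ : Continuous (Function.uncurry ψ))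
    (hs : Bornology.IsBounded s) {a b : ℝ} (hab : a ≤ b) {m : ℝ → ℝ}
    (hm : IntervalIntegrable m volume a b) (hle : ∀ t ∈ Ioo a b, ∫ z in s, ψ z t ∂μ ≤ m t) :
    ∫ z in s, (∫ t in a..b, ψ z t) ∂μ ≤ ∫ t in a..b, m t := by
  have hint :
      Integrable (Function.uncurry ψ) ((μ.restrict s).prod (volume.restrict (Ioc a b))) := by
    rw [Measure.prod_restrict]
    exact integrableOn_of_continuous_of_isBounded hψ (hs.prod (Metric.isBounded_Ioc a b))
  calc ∫ z in s, (∫ t in a..b, ψ z t) ∂μ = ∫ t in a..b, (∫ z in s, ψ z t ∂μ) := by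
        simp only [intervalIntegral.integral_of_le hab]
        exact integral_integral_swap hint
    _ ≤ ∫ t in a..b, m t :=
        intervalIntegral.integral_mono_on_of_le_Ioo hab
          ((intervalIntegrable_iff_integrableOn_Ioc_of_le hab).2 hint.integral_prod_right) hm hle

end BoundedSets

section UnitCube

/-- The half-open unit cube `[0, 1)^ι`, a fundamental domain of the torus `(ℝ/ℤ)^ι`. -/
def unitCube (ι : Type*) : Set (EuclideanSpace ℝ ι) := {y | ∀ i, y i ∈ Ico (0 : ℝ) 1}

variable {ι : Type*}

lemma unitCube_eq_preimage : unitCube ι = WithLp.ofLp ⁻¹' univ.pi fun _ => Ico (0 : ℝ) 1 := by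
  ext z
  simp [unitCube]

lemma measurableSet_unitCube [Countable ι] : MeasurableSet (unitCube ι) := by
  rw [unitCube_eq_preimage]
  exact WithLp.measurable_ofLp 2 _ (MeasurableSet.univ_pi fun _ => measurableSet_Ico)

variable [Fintype ι]

instance : IsProbabilityMeasure (volume.restrict (unitCube ι)) where
  measure_univ := by
    rw [Measure.restrict_apply_univ, unitCube_eq_preimage,
      (PiLp.volume_preserving_ofLp ι).measure_preimage
        (MeasurableSet.univ_pi fun _ => measurableSet_Ico).nullMeasurableSet]
    simp [volume_pi_pi]

lemma norm_le_sqrt_card_of_abs_le_one {z : EuclideanSpace ℝ ι} (hz : ∀ i, |z i| ≤ 1) :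
    ‖z‖ ≤ √(Fintype.card ι) := by
  rw [EuclideanSpace.norm_eq]
  gcongr
  simpa using Finset.sum_le_card_nsmul Finset.univ (fun i => ‖z i‖ ^ 2) 1
    fun i _ => pow_le_one₀ (norm_nonneg _) (hz i)

lemma norm_le_sqrt_card_of_mem_unitCube {z : EuclideanSpace ℝ ι} (hz : z ∈ unitCube ι) :
    ‖z‖ ≤ √(Fintype.card ι) :=
  norm_le_sqrt_card_of_abs_le_one fun i => abs_le.2 ⟨by linarith [(hz i).1], (hz i).2.le⟩

omit [Fintype ι] in
lemma isBounded_unitCube [Finite ι] : Bornology.IsBounded (unitCube ι) := by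
  have := Fintype.ofFinite ι
  exact isBounded_iff_forall_norm_le.2 ⟨_, fun _ => norm_le_sqrt_card_of_mem_unitCube⟩

end UnitCube

section UnitPrism

variable {n : ℕ} {F : Type*} [NormedAddCommGroup F]

/-- The prism over a set `S` of values of the `i`-th coordinate, the cross-section being the
half-open unit cube in the other coordinates. It is a fundamental domain of `S × 𝕋ⁿ`. -/
def unitPrism (i : Fin (n + 1)) (S : Set ℝ) : Set (EuclideanSpace ℝ (Fin (n + 1))) :=
  {y | y i ∈ S ∧ ∀ j, y (i.succAbove j) ∈ Ico (0 : ℝ) 1}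

lemma unitPrism_Ico_zero_one (i : Fin (n + 1)) :
    unitPrism i (Ico 0 1) = unitCube (Fin (n + 1)) := by
  ext y
  exact (Fin.forall_iff_succAbove (P := fun j => y j ∈ Ico (0 : ℝ) 1) i).symm

lemma Omega_eq_unitPrism : Omega = unitPrism (n := 2) 0 (Ioi 0) := by
  ext y
  simp [Omega, unitPrism, Fin.forall_fin_two]

lemma unitPrism_mono (i : Fin (n + 1)) {S S' : Set ℝ} (h : S ⊆ S') :
    unitPrism i S ⊆ unitPrism i S' :=
  fun _ hy => ⟨h hy.1, hy.2⟩

/-- The splitting of `ℝⁿ⁺¹` into the `i`-th coordinate and the remaining ones, as a measurable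
equivalence that transports Fubini's theorem to prisms. -/
def insertCoord (i : Fin (n + 1)) :
    ℝ × EuclideanSpace ℝ (Fin n) ≃ᵐ EuclideanSpace ℝ (Fin (n + 1)) :=
  ((MeasurableEquiv.refl ℝ).prodCongr (MeasurableEquiv.toLp 2 (Fin n → ℝ)).symm).trans
    ((MeasurableEquiv.piFinSuccAbove (fun _ => ℝ) i).symm.trans
      (MeasurableEquiv.toLp 2 (Fin (n + 1) → ℝ)))

@[simp]
lemma insertCoord_apply_self (i : Fin (n + 1)) (t : ℝ) (w : EuclideanSpace ℝ (Fin n)) :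
    insertCoord i (t, w) i = t :=
  Fin.insertNth_apply_same (α := fun _ => ℝ) i t w

@[simp]
lemma insertCoord_apply_succAbove (i : Fin (n + 1)) (t : ℝ) (w : EuclideanSpace ℝ (Fin n))
    (j : Fin n) : insertCoord i (t, w) (i.succAbove j) = w j :=
  Fin.insertNth_apply_succAbove (α := fun _ => ℝ) i t w j

lemma smul_single_add_insertCoord (i : Fin (n + 1)) (c t : ℝ) (w : EuclideanSpace ℝ (Fin n)) :
    c • EuclideanSpace.single i 1 + insertCoord i (t, w) = insertCoord i (c + t, w) := by
  ext j
  cases j using i.succAboveCases <;> simp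

lemma measurePreserving_insertCoord (i : Fin (n + 1)) : MeasurePreserving (insertCoord i) :=
  (PiLp.volume_preserving_toLp (Fin (n + 1))).comp
    ((volume_preserving_piFinSuccAbove (fun _ => ℝ) i).symm.comp
      ((MeasurePreserving.id volume).prod (PiLp.volume_preserving_ofLp (Fin n))))

lemma insertCoord_preimage_unitPrism (i : Fin (n + 1)) (S : Set ℝ) :
    insertCoord i ⁻¹' unitPrism i S = S ×ˢ unitCube (Fin n) := by
  ext ⟨t, w⟩
  simp [unitPrism, unitCube]

lemma integrableOn_unitPrism_iff {i : Fin (n + 1)} {S : Set ℝ}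
    {f : EuclideanSpace ℝ (Fin (n + 1)) → F} :
    IntegrableOn f (unitPrism i S) ↔ Integrable (fun p => f (insertCoord i p))
      ((volume.restrict S).prod (volume.restrict (unitCube (Fin n)))) := by
  rw [← (measurePreserving_insertCoord i).integrableOn_comp_preimage
    (insertCoord i).measurableEmbedding, insertCoord_preimage_unitPrism, Measure.prod_restrict]
  rfl

lemma setIntegral_unitPrism [NormedSpace ℝ F] {i : Fin (n + 1)} {S : Set ℝ}
    {f : EuclideanSpace ℝ (Fin (n + 1)) → F} (hf : IntegrableOn f (unitPrism i S)) :
    ∫ y in unitPrism i S, f y =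
      ∫ w in unitCube (Fin n), ∫ t in S, f (insertCoord i (t, w)) := by
  rw [← (measurePreserving_insertCoord i).setIntegral_preimage_emb
    (insertCoord i).measurableEmbedding, insertCoord_preimage_unitPrism]
  rw [integrableOn_unitPrism_iff] at hf
  rw [Measure.volume_eq_prod, ← Measure.prod_restrict]
  exact integral_prod_symm _ hf

end UnitPrism

section Periodicity

variable {n : ℕ} {F G : Type*} {i : Fin (n + 1)}

/-- `f` is `1`-periodic in every coordinate except the `i`-th one, so that it is a function on
`ℝ × 𝕋ⁿ` whose non-compact variable is the `i`-th coordinate. -/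
def PeriodicOff (i : Fin (n + 1)) (f : EuclideanSpace ℝ (Fin (n + 1)) → F) : Prop :=
  ∀ j ≠ i, Function.Periodic f (EuclideanSpace.single j 1)

namespace PeriodicOff

lemma comp_left {f : EuclideanSpace ℝ (Fin (n + 1)) → F} (hf : PeriodicOff i f) (g : F → G) :
    PeriodicOff i fun y => g (f y) :=
  fun j hj => (hf j hj).comp g

lemma comp_add_left {f : EuclideanSpace ℝ (Fin (n + 1)) → F} (hf : PeriodicOff i f)
    (x : EuclideanSpace ℝ (Fin (n + 1))) : PeriodicOff i fun y => f (x + y) :=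
  fun j hj y => by simp only [← add_assoc, hf j hj (x + y)]

lemma fderiv [NormedAddCommGroup F] [NormedSpace ℝ F]
    {f : EuclideanSpace ℝ (Fin (n + 1)) → F} (hf : PeriodicOff i f) :
    PeriodicOff i (fderiv ℝ f) := fun j hj x => by
  rw [← fderiv_comp_add_right, (hf j hj).funext]

end PeriodicOff

variable [NormedAddCommGroup F] [NormedSpace ℝ F]

lemma setIntegral_unitCube_comp_smul_single_add {φ : EuclideanSpace ℝ (Fin (n + 1)) → F}
    (hφ : Continuous φ) (hper : Function.Periodic φ (EuclideanSpace.single i 1)) (c : ℝ) :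
    ∫ z in unitCube (Fin (n + 1)), φ (c • EuclideanSpace.single i 1 + z) =
      ∫ z in unitCube (Fin (n + 1)), φ z := by
  have hline (w : EuclideanSpace ℝ (Fin n)) :
      Function.Periodic (fun t => φ (insertCoord i (t, w))) 1 := fun t => by
    simpa only [add_comm t 1, ← smul_single_add_insertCoord i 1, one_smul,
      add_comm (insertCoord i (t, w))] using hper (insertCoord i (t, w))
  simp only [← unitPrism_Ico_zero_one i]
  rw [setIntegral_unitPrism, setIntegral_unitPrism]
  · congr 1 with w
    simp only [smul_single_add_insertCoord, integral_Ico_eq_integral_Ioc,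
      ← intervalIntegral.integral_of_le zero_le_one]
    rw [intervalIntegral.integral_comp_add_left fun t => φ (insertCoord i (t, w))]
    simpa using (hline w).intervalIntegral_add_eq c 0
  all_goals
    rw [unitPrism_Ico_zero_one]
    exact integrableOn_of_continuous_of_isBounded (by fun_prop) isBounded_unitCube

lemma setIntegral_unitCube_comp_add {φ : EuclideanSpace ℝ (Fin (n + 1)) → F} (hφ : Continuous φ)
    (hper : PeriodicOff i φ) {v : EuclideanSpace ℝ (Fin (n + 1))} (hv : v i = 0) :
    ∫ z in unitCube (Fin (n + 1)), φ (v + z) = ∫ z in unitCube (Fin (n + 1)), φ z := by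
  have partial_sum (s : Finset (Fin (n + 1))) :
      ∫ z in unitCube (Fin (n + 1)), φ (∑ j ∈ s, v j • EuclideanSpace.single j 1 + z) =
        ∫ z in unitCube (Fin (n + 1)), φ z := by
    induction s using Finset.induction_on with
    | empty => simp
    | insert j s hj ih =>
      rw [← ih]
      rcases eq_or_ne j i with rfl | hji
      · simp [hj, hv]
      · set u := ∑ k ∈ s, v k • EuclideanSpace.single k (1 : ℝ)
        have hassoc (z) : ∑ k ∈ insert j s, v k • EuclideanSpace.single k (1 : ℝ) + z =
            u + (v j • EuclideanSpace.single j 1 + z) := by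
          rw [Finset.sum_insert hj, add_assoc, add_left_comm]
        simp only [hassoc]
        exact setIntegral_unitCube_comp_smul_single_add (φ := fun y => φ (u + y)) (by fun_prop)
          (hper.comp_add_left u j hji) (v j)
  have hsum : ∑ j, v j • EuclideanSpace.single j (1 : ℝ) = v := by
    simpa using (EuclideanSpace.basisFun (Fin (n + 1)) ℝ).sum_repr v
  simpa only [hsum] using partial_sum Finset.univ

end Periodicity

section HalfLine

variable {n : ℕ} {i : Fin (n + 1)} {x : EuclideanSpace ℝ (Fin (n + 1))}

lemma setIntegral_unitCube_comp_add_le {φ : EuclideanSpace ℝ (Fin (n + 1)) → ℝ}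
    (hφ : Continuous φ) (hnonneg : ∀ y, 0 ≤ φ y) (hper : PeriodicOff i φ)
    (hint : IntegrableOn φ (unitPrism i (Ioi 0))) (hx : 0 < x i) :
    ∫ z in unitCube (Fin (n + 1)), φ (x + z) ≤ ∫ y in unitPrism i (Ioi 0), φ y := by
  set c : EuclideanSpace ℝ (Fin (n + 1)) := x i • EuclideanSpace.single i 1
  have hslab : (c + ·) ⁻¹' unitPrism i (Ico (x i) (x i + 1)) = unitCube (Fin (n + 1)) := by
    ext z
    simp [← unitPrism_Ico_zero_one i, unitPrism, c]
  calc ∫ z in unitCube (Fin (n + 1)), φ (x + z)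
      = ∫ z in unitCube (Fin (n + 1)), φ (c + ((x - c) + z)) := by
        simp only [← add_assoc, add_sub_cancel]
    _ = ∫ z in unitCube (Fin (n + 1)), φ (c + z) :=
        setIntegral_unitCube_comp_add (by fun_prop) (hper.comp_add_left c) (by simp [c])
    _ = ∫ y in unitPrism i (Ico (x i) (x i + 1)), φ y := by
        rw [← hslab]
        exact (measurePreserving_add_left volume c).setIntegral_preimage_emb
          (measurableEmbedding_addLeft c) φ _
    _ ≤ ∫ y in unitPrism i (Ioi 0), φ y :=
        setIntegral_mono_set hint (.of_forall hnonneg)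
          (unitPrism_mono i fun _ ht => hx.trans_le ht.1).eventuallyLE

open Pointwise in
lemma setIntegral_unitCube_comp_add_smul_le {φ : EuclideanSpace ℝ (Fin (n + 1)) → ℝ}
    (hφ : Continuous φ) (hnonneg : ∀ y, 0 ≤ φ y) (hper : PeriodicOff i φ)
    (hint : IntegrableOn φ (unitPrism i (Ioi 0))) (hx : 0 < x i) {s : ℝ} (hs : s ∈ Ioc 0 1) :
    ∫ z in unitCube (Fin (n + 1)), φ (x + s • z) ≤
      (s ^ (n + 1))⁻¹ * ∫ y in unitPrism i (Ioi 0), φ y := by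
  have hsub : s • unitCube (Fin (n + 1)) ⊆ unitCube (Fin (n + 1)) := by
    rintro _ ⟨z, hz, rfl⟩ j
    exact ⟨mul_nonneg hs.1.le (hz j).1,
      (mul_le_of_le_one_left (hz j).1 hs.2).trans_lt (hz j).2⟩
  rw [Measure.setIntegral_comp_smul_of_pos volume (fun z => φ (x + z)) _ hs.1,
    finrank_euclideanSpace_fin, smul_eq_mul]
  have := hs.1
  gcongr
  calc ∫ z in s • unitCube (Fin (n + 1)), φ (x + z)
      ≤ ∫ z in unitCube (Fin (n + 1)), φ (x + z) :=
        setIntegral_mono_set (integrableOn_of_continuous_of_isBounded (by fun_prop)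
          isBounded_unitCube) (.of_forall fun _ => hnonneg _) hsub.eventuallyLE
    _ ≤ _ := setIntegral_unitCube_comp_add_le hφ hnonneg hper hint hx

lemma setIntegral_unitCube_norm_comp_add_smul_le {F : Type*} [NormedAddCommGroup F]
    {f : EuclideanSpace ℝ (Fin (n + 1)) → F} (hf : Continuous f) (hper : PeriodicOff i f)
    (hL2 : MemLp f 2 (volume.restrict (unitPrism i (Ioi 0)))) (hx : 0 < x i) {s : ℝ}
    (hs : s ∈ Ioc 0 1) :
    ∫ z in unitCube (Fin (n + 1)), ‖f (x + s • z)‖ ≤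
      l2Norm (volume.restrict (unitPrism i (Ioi 0))) f * s ^ (-((n + 1) / 2) : ℝ) := by
  have hpow : √(s ^ (n + 1))⁻¹ = s ^ (-((n + 1) / 2) : ℝ) := by
    rw [Real.sqrt_inv, Real.sqrt_eq_rpow, ← Real.rpow_natCast_mul hs.1.le, Real.rpow_neg hs.1.le]
    push_cast
    ring_nf
  calc ∫ z in unitCube (Fin (n + 1)), ‖f (x + s • z)‖
      ≤ √(∫ z in unitCube (Fin (n + 1)), ‖f (x + s • z)‖ ^ 2) :=
        integral_norm_le_l2Norm (memLp_two_restrict_of_continuous_of_isBounded (by fun_prop)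
          isBounded_unitCube)
    _ ≤ √((s ^ (n + 1))⁻¹ * ∫ y in unitPrism i (Ioi 0), ‖f y‖ ^ 2) :=
        Real.sqrt_le_sqrt (setIntegral_unitCube_comp_add_smul_le (hf.norm.pow 2)
          (fun _ => sq_nonneg _) (hper.comp_left fun y => ‖y‖ ^ 2)
          ((memLp_two_iff_integrable_sq_norm hf.aestronglyMeasurable).1 hL2) hx hs)
    _ = l2Norm (volume.restrict (unitPrism i (Ioi 0))) f * s ^ (-((n + 1) / 2) : ℝ) := by
        rw [Real.sqrt_mul (by have := hs.1; positivity), hpow, mul_comm, l2Norm]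

end HalfLine

section Segments

variable {E F : Type*} [NormedAddCommGroup E] [NormedSpace ℝ E] [NormedAddCommGroup F]
  [NormedSpace ℝ F] {f : E → F}

lemma hasDerivAt_comp_add_smul (hf : Differentiable ℝ f) (x z : E) (s : ℝ) :
    HasDerivAt (fun s : ℝ => f (x + s • z)) (fderiv ℝ f (x + s • z) z) s := by
  have hline : HasDerivAt (fun s : ℝ => x + s • z) z s := by
    simpa using ((hasDerivAt_id s).smul_const z).const_add x
  exact (hf _).hasFDerivAt.comp_hasDerivAt s hline

lemma norm_comp_add_smul_sub_le (hf : ContDiff ℝ 1 f) (x z : E) {a b : ℝ} (hab : a ≤ b) :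
    ‖f (x + b • z) - f (x + a • z)‖ ≤ ‖z‖ * ∫ s in a..b, ‖fderiv ℝ f (x + s • z)‖ := by
  have := hf.continuous_fderiv one_ne_zero
  have hderiv := hasDerivAt_comp_add_smul (hf.differentiable one_ne_zero) x z
  rw [← intervalIntegral.integral_const_mul]
  refine norm_sub_le_integral_of_norm_deriv_le_of_le (f := fun s => f (x + s • z)) hab
    (hf.continuous.comp (by fun_prop)).continuousOn
    (fun s _ => (hderiv s).differentiableAt.differentiableWithinAt)
    (.of_forall fun s _ => ?_) (Continuous.intervalIntegrable (by fun_prop) a b)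
  rw [(hderiv s).deriv, mul_comm]
  exact ContinuousLinearMap.le_opNorm _ _

lemma norm_add_smul_fderiv_sub_le (hf : ContDiff ℝ 2 f) (x z : E) {r : ℝ} (hr : 0 ≤ r) :
    ‖f x + r • fderiv ℝ f (x + r • z) z - f (x + r • z)‖ ≤
      ‖z‖ ^ 2 * ∫ s in 0..r, s * ‖fderiv ℝ (fderiv ℝ f) (x + s • z)‖ := by
  have hf' : ContDiff ℝ 1 (fderiv ℝ f) := hf.fderiv_right le_rfl
  have hf'' := hf'.continuous_fderiv one_ne_zero
  let T (s : ℝ) : F := s • fderiv ℝ f (x + s • z) z - f (x + s • z)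
  have hderiv (s : ℝ) : HasDerivAt T (s • fderiv ℝ (fderiv ℝ f) (x + s • z) z z) s := by
    have hDf := (hasDerivAt_comp_add_smul (hf'.differentiable one_ne_zero) x z s).clm_apply
      (hasDerivAt_const s z)
    exact (((hasDerivAt_id s).smul hDf).sub
      (hasDerivAt_comp_add_smul (hf.differentiable two_ne_zero) x z s)).congr_deriv (by simp)
  have hT := norm_sub_le_integral_of_norm_deriv_le_of_le (f := T) hr
    (B := fun s => ‖z‖ ^ 2 * (s * ‖fderiv ℝ (fderiv ℝ f) (x + s • z)‖))
    (fun s _ => (hderiv s).continuousAt.continuousWithinAt)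
    (fun s _ => (hderiv s).differentiableAt.differentiableWithinAt)
    (.of_forall fun s hs => ?_)
    ((continuous_id.mul (hf''.comp (by fun_prop)).norm).const_mul (‖z‖ ^ 2)
      |>.intervalIntegrable 0 r)
  · rw [intervalIntegral.integral_const_mul] at hT
    convert hT using 2
    simp only [T, zero_smul, add_zero]
    abel
  · rw [(hderiv s).deriv, norm_smul, Real.norm_of_nonneg hs.1.le]
    calc s * ‖fderiv ℝ (fderiv ℝ f) (x + s • z) z z‖
        ≤ s * (‖fderiv ℝ (fderiv ℝ f) (x + s • z)‖ * ‖z‖ * ‖z‖) :=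
          mul_le_mul_of_nonneg_left (ContinuousLinearMap.le_opNorm₂ _ z z) hs.1.le
      _ = ‖z‖ ^ 2 * (s * ‖fderiv ℝ (fderiv ℝ f) (x + s • z)‖) := by ring

lemma norm_sub_comp_add_le (hf : ContDiff ℝ 2 f) (x z : E) {r : ℝ} (hr : r ∈ Icc 0 1) :
    ‖f x - f (x + z)‖ ≤ ‖z‖ * (∫ s in r..1, ‖fderiv ℝ f (x + s • z)‖) +
      r * ‖z‖ * ‖fderiv ℝ f (x + r • z)‖ +
      ‖z‖ ^ 2 * ∫ s in 0..r, s * ‖fderiv ℝ (fderiv ℝ f) (x + s • z)‖ := by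
  have far := norm_comp_add_smul_sub_le (hf.of_le one_le_two) x z hr.2
  have near := norm_add_smul_fderiv_sub_le hf x z hr.1
  have middle : ‖r • fderiv ℝ f (x + r • z) z‖ ≤ r * ‖z‖ * ‖fderiv ℝ f (x + r • z)‖ := by
    rw [norm_smul, Real.norm_of_nonneg hr.1, mul_assoc, mul_comm ‖z‖]
    exact mul_le_mul_of_nonneg_left (ContinuousLinearMap.le_opNorm _ z) hr.1
  rw [one_smul] at far
  calc ‖f x - f (x + z)‖
      = ‖(f x + r • fderiv ℝ f (x + r • z) z - f (x + r • z)) -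
          r • fderiv ℝ f (x + r • z) z - (f (x + z) - f (x + r • z))‖ := by congr 1; abel
    _ ≤ _ := by linarith [norm_sub_le_of_le (norm_sub_le_of_le near middle) far]

end Segments

section Cone

lemma le_two_mul_sqrt_mul_sqrt_of_forall_le {X P Q : ℝ} (hP : 0 ≤ P) (hPQ : P ≤ Q)
    (h : ∀ ρ ∈ Ioc (0 : ℝ) 1, X ≤ P / ρ + Q * ρ) : X ≤ 2 * √P * √Q := by
  rcases hP.eq_or_lt with rfl | hP
  · have hlim : Filter.Tendsto (fun ρ => Q * ρ) (nhdsWithin 0 (Ioi 0)) (nhds 0) :=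
      tendsto_nhdsWithin_of_tendsto_nhds (by simpa using (continuous_const_mul Q).tendsto 0)
    have hev : ∀ᶠ ρ in nhdsWithin (0 : ℝ) (Ioi 0), X ≤ Q * ρ :=
      Filter.mem_of_superset (Ioc_mem_nhdsGT zero_lt_one) fun ρ hρ => by simpa using h ρ hρ
    simpa using ge_of_tendsto hlim hev
  · have hQ : 0 < √Q := Real.sqrt_pos.2 (hP.trans_le hPQ)
    have : 0 < √P := Real.sqrt_pos.2 hP
    calc X ≤ P / (√P / √Q) + Q * (√P / √Q) :=
          h _ ⟨by positivity, (div_le_one hQ).2 (Real.sqrt_le_sqrt hPQ)⟩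
      _ = √P ^ 2 / (√P / √Q) + √Q ^ 2 * (√P / √Q) := by
          rw [Real.sq_sqrt hP.le, Real.sq_sqrt (hP.le.trans hPQ)]
      _ = 2 * √P * √Q := by field_simp; ring

lemma integral_rpow_neg_three_halves_le {ρ : ℝ} (hρ : 0 < ρ) :
    ∫ s in ρ ^ 2..1, s ^ (-(3 / 2) : ℝ) ≤ 2 / ρ := by
  rw [integral_rpow (.inr ⟨by norm_num, notMem_uIcc_of_lt (by positivity) one_pos⟩),
    ← Real.rpow_natCast_mul hρ.le]
  norm_num [Real.rpow_neg_one]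
  field_simp
  linarith

lemma integral_rpow_neg_one_half {ρ : ℝ} (hρ : 0 ≤ ρ) :
    ∫ s in 0..ρ ^ 2, s ^ (-(1 / 2) : ℝ) = 2 * ρ := by
  rw [integral_rpow (.inl (by norm_num)), ← Real.rpow_natCast_mul hρ]
  norm_num
  ring

variable {E F : Type*} [NormedAddCommGroup E] [NormedSpace ℝ E] [ProperSpace E]
  [MeasurableSpace E] [BorelSpace E] [NormedAddCommGroup F] [NormedSpace ℝ F] [CompleteSpace F]
  {μ : Measure E} [IsFiniteMeasureOnCompacts μ] {K : Set E} {x : E} {A B ρ : ℝ}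

lemma setIntegral_integral_comp_add_smul_le {φ : E → ℝ} (hφ : Continuous φ)
    (hK : Bornology.IsBounded K) (hρ : ρ ∈ Ioc 0 1)
    (hA : ∀ s ∈ Ioc (0 : ℝ) 1, ∫ z in K, φ (x + s • z) ∂μ ≤ A * s ^ (-(3 / 2) : ℝ)) :
    ∫ z in K, (∫ s in ρ ^ 2..1, φ (x + s • z)) ∂μ ≤ A * ∫ s in ρ ^ 2..1, s ^ (-(3 / 2) : ℝ) := by
  have hρ2 : 0 < ρ ^ 2 := pow_pos hρ.1 2
  rw [← intervalIntegral.integral_const_mul]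
  exact setIntegral_intervalIntegral_le (by fun_prop) hK (pow_le_one₀ hρ.1.le hρ.2)
    ((intervalIntegral.intervalIntegrable_rpow
      (.inr (notMem_uIcc_of_lt hρ2 one_pos))).const_mul A)
    fun s hs => hA s ⟨hρ2.trans hs.1, hs.2.le⟩

lemma setIntegral_integral_mul_comp_add_smul_le {φ : E → ℝ} (hφ : Continuous φ)
    (hK : Bornology.IsBounded K) (hρ : ρ ∈ Ioc 0 1)
    (hB : ∀ s ∈ Ioc (0 : ℝ) 1, ∫ z in K, φ (x + s • z) ∂μ ≤ B * s ^ (-(3 / 2) : ℝ)) :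
    ∫ z in K, (∫ s in 0..ρ ^ 2, s * φ (x + s • z)) ∂μ ≤ 2 * B * ρ := by
  have hρ2 : ρ ^ 2 ≤ 1 := pow_le_one₀ hρ.1.le hρ.2
  calc ∫ z in K, (∫ s in 0..ρ ^ 2, s * φ (x + s • z)) ∂μ
      ≤ ∫ s in 0..ρ ^ 2, B * s ^ (-(1 / 2) : ℝ) := by
        refine setIntegral_intervalIntegral_le (by fun_prop) hK (sq_nonneg ρ)
          ((intervalIntegral.intervalIntegrable_rpow' (by norm_num)).const_mul B) fun s hs => ?_
        rw [integral_const_mul]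
        calc s * ∫ z in K, φ (x + s • z) ∂μ ≤ s * (B * s ^ (-(3 / 2) : ℝ)) :=
              mul_le_mul_of_nonneg_left (hB s ⟨hs.1, hs.2.le.trans hρ2⟩) hs.1.le
          _ = B * s ^ (-(1 / 2) : ℝ) := by
              rw [mul_left_comm, ← Real.rpow_one_add' hs.1.le (by norm_num)]
              norm_num
    _ = 2 * B * ρ := by
        rw [intervalIntegral.integral_const_mul, integral_rpow_neg_one_half hρ.1.le]
        ring

lemma setIntegral_le_of_le_segment_integrals {h φ χ : E → ℝ} (hh : IntegrableOn h K μ)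
    (hK : MeasurableSet K) (hKb : Bornology.IsBounded K) (hφ : Continuous φ)
    (hφ0 : ∀ y, 0 ≤ φ y) (hχ : Continuous χ) {R : ℝ} (hR : 0 ≤ R)
    (hA : ∀ s ∈ Ioc (0 : ℝ) 1, ∫ z in K, φ (x + s • z) ∂μ ≤ A * s ^ (-(3 / 2) : ℝ))
    (hB : ∀ s ∈ Ioc (0 : ℝ) 1, ∫ z in K, χ (x + s • z) ∂μ ≤ B * s ^ (-(3 / 2) : ℝ))
    (hρ : ρ ∈ Ioc 0 1)
    (hle : ∀ z ∈ K, h z ≤ R * (∫ s in ρ ^ 2..1, φ (x + s • z)) + ρ ^ 2 * R * φ (x + ρ ^ 2 • z) +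
      R ^ 2 * ∫ s in 0..ρ ^ 2, s * χ (x + s • z)) :
    ∫ z in K, h z ∂μ ≤ 3 * R * A / ρ + 2 * R ^ 2 * B * ρ := by
  have hA0 : 0 ≤ A := by
    simpa using (integral_nonneg fun _ => hφ0 _).trans (hA 1 ⟨one_pos, le_rfl⟩)
  have hpow : (ρ ^ 2) ^ (-(3 / 2) : ℝ) = (ρ ^ 3)⁻¹ := by
    rw [← Real.rpow_natCast_mul hρ.1.le, ← Real.rpow_natCast, ← Real.rpow_neg hρ.1.le]
    norm_num
  have far : ∫ z in K, (∫ s in ρ ^ 2..1, φ (x + s • z)) ∂μ ≤ A * (2 / ρ) :=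
    (setIntegral_integral_comp_add_smul_le hφ hKb hρ hA).trans
      (mul_le_mul_of_nonneg_left (integral_rpow_neg_three_halves_le hρ.1) hA0)
  have middle : ∫ z in K, φ (x + ρ ^ 2 • z) ∂μ ≤ A * (ρ ^ 3)⁻¹ :=
    hpow ▸ hA (ρ ^ 2) ⟨pow_pos hρ.1 2, pow_le_one₀ hρ.1.le hρ.2⟩
  have near := setIntegral_integral_mul_comp_add_smul_le hχ hKb hρ hB
  have hfar_int : IntegrableOn (fun z => ∫ s in ρ ^ 2..1, φ (x + s • z)) K μ :=
    integrableOn_of_continuous_of_isBounded (by fun_prop) hKb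
  have hmiddle_int : IntegrableOn (fun z => φ (x + ρ ^ 2 • z)) K μ :=
    integrableOn_of_continuous_of_isBounded (by fun_prop) hKb
  have hnear_int : IntegrableOn (fun z => ∫ s in 0..ρ ^ 2, s * χ (x + s • z)) K μ :=
    integrableOn_of_continuous_of_isBounded (by fun_prop) hKb
  calc ∫ z in K, h z ∂μ
      ≤ ∫ z in K, (R * (∫ s in ρ ^ 2..1, φ (x + s • z)) + ρ ^ 2 * R * φ (x + ρ ^ 2 • z) +
          R ^ 2 * ∫ s in 0..ρ ^ 2, s * χ (x + s • z)) ∂μ :=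
        setIntegral_mono_on hh (((hfar_int.const_mul _).fun_add (hmiddle_int.const_mul _)).fun_add
          (hnear_int.const_mul _)) hK hle
    _ = R * (∫ z in K, (∫ s in ρ ^ 2..1, φ (x + s • z)) ∂μ) +
          ρ ^ 2 * R * (∫ z in K, φ (x + ρ ^ 2 • z) ∂μ) +
          R ^ 2 * ∫ z in K, (∫ s in 0..ρ ^ 2, s * χ (x + s • z)) ∂μ := by
        rw [integral_add ((hfar_int.const_mul _).fun_add (hmiddle_int.const_mul _))
          (hnear_int.const_mul _), integral_add (hfar_int.const_mul _) (hmiddle_int.const_mul _)]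
        simp only [integral_const_mul]
    _ ≤ R * (A * (2 / ρ)) + ρ ^ 2 * R * (A * (ρ ^ 3)⁻¹) + R ^ 2 * (2 * B * ρ) := by gcongr
    _ = 3 * R * A / ρ + 2 * R ^ 2 * B * ρ := by
        have := hρ.1.ne'
        field_simp
        ring

lemma norm_sub_setIntegral_comp_add_le [IsProbabilityMeasure (μ.restrict K)] {f : E → F}
    (hf : ContDiff ℝ 2 f) (hK : MeasurableSet K) {R : ℝ} (hR : ∀ z ∈ K, ‖z‖ ≤ R)
    (hA : ∀ s ∈ Ioc (0 : ℝ) 1, ∫ z in K, ‖fderiv ℝ f (x + s • z)‖ ∂μ ≤ A * s ^ (-(3 / 2) : ℝ))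
    (hB : ∀ s ∈ Ioc (0 : ℝ) 1,
      ∫ z in K, ‖fderiv ℝ (fderiv ℝ f) (x + s • z)‖ ∂μ ≤ B * s ^ (-(3 / 2) : ℝ))
    (hρ : ρ ∈ Ioc 0 1) :
    ‖f x - ∫ z in K, f (x + z) ∂μ‖ ≤ 3 * R * A / ρ + 2 * R ^ 2 * B * ρ := by
  have hρ2 : ρ ^ 2 ∈ Icc (0 : ℝ) 1 := ⟨sq_nonneg ρ, pow_le_one₀ hρ.1.le hρ.2⟩
  have hKb : Bornology.IsBounded K := isBounded_iff_forall_norm_le.2 ⟨R, hR⟩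
  have hR0 : 0 ≤ R := by
    obtain ⟨z, hz⟩ := (ae_restrict_mem (μ := μ) hK).exists
    exact (norm_nonneg z).trans (hR z hz)
  have hcont : Continuous fun z => f (x + z) := hf.continuous.comp (by fun_prop)
  calc ‖f x - ∫ z in K, f (x + z) ∂μ‖ = ‖∫ z in K, (f x - f (x + z)) ∂μ‖ := by
        rw [integral_sub (integrable_const _)
          (integrableOn_of_continuous_of_isBounded hcont hKb)]
        simp
    _ ≤ ∫ z in K, ‖f x - f (x + z)‖ ∂μ := norm_integral_le_integral_norm _
    _ ≤ 3 * R * A / ρ + 2 * R ^ 2 * B * ρ := by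
        refine setIntegral_le_of_le_segment_integrals
          (integrableOn_of_continuous_of_isBounded (continuous_const.sub hcont).norm hKb) hK hKb
          (hf.continuous_fderiv two_ne_zero).norm (fun _ => norm_nonneg _)
          ((hf.fderiv_right le_rfl).continuous_fderiv one_ne_zero).norm hR0 hA hB hρ
          fun z hz => (norm_sub_comp_add_le hf x z hρ2).trans ?_
        have := hR z hz
        gcongr
        · exact intervalIntegral.integral_nonneg hρ2.2 fun _ _ => norm_nonneg _
        · exact intervalIntegral.integral_nonneg hρ2.1 fun s hs =>
            mul_nonneg hs.1 (norm_nonneg (fderiv ℝ (fderiv ℝ f) _))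

lemma norm_sub_setIntegral_comp_add_le_sqrt_mul_sqrt [IsProbabilityMeasure (μ.restrict K)]
    {f : E → F} (hf : ContDiff ℝ 2 f) (hK : MeasurableSet K) (hK2 : ∀ z ∈ K, ‖z‖ ≤ 2)
    (hA0 : 0 ≤ A) (hAB : A ≤ B)
    (hA : ∀ s ∈ Ioc (0 : ℝ) 1, ∫ z in K, ‖fderiv ℝ f (x + s • z)‖ ∂μ ≤ A * s ^ (-(3 / 2) : ℝ))
    (hB : ∀ s ∈ Ioc (0 : ℝ) 1,
      ∫ z in K, ‖fderiv ℝ (fderiv ℝ f) (x + s • z)‖ ∂μ ≤ B * s ^ (-(3 / 2) : ℝ)) :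
    ‖f x - ∫ z in K, f (x + z) ∂μ‖ ≤ 16 * √A * √B := by
  have hscaled (ρ : ℝ) (hρ : ρ ∈ Ioc (0 : ℝ) 1) :
      ‖f x - ∫ z in K, f (x + z) ∂μ‖ / 8 ≤ A / ρ + B * ρ := by
    have hcone := norm_sub_setIntegral_comp_add_le hf hK hK2 hA hB hρ
    rw [mul_div_assoc] at hcone
    linarith [div_nonneg hA0 hρ.1.le]
  linarith [le_two_mul_sqrt_mul_sqrt_of_forall_le hA0 hAB hscaled]

end Cone

section Translation

variable {n : ℕ} {F : Type*} [NormedAddCommGroup F] {i : Fin (n + 1)}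
  {f : EuclideanSpace ℝ (Fin (n + 1)) → F} {x v : EuclideanSpace ℝ (Fin (n + 1))} {s : ℝ}

lemma setIntegral_unitCube_norm_translate_sub_le (hf : Continuous f) (hper : PeriodicOff i f)
    (hL2 : MemLp f 2 (volume.restrict (unitPrism i (Ioi 0)))) (hx : 0 < x i) (hv : v i = 0)
    (hs : s ∈ Ioc 0 1) :
    ∫ z in unitCube (Fin (n + 1)), ‖f (x + s • z + v) - f (x + s • z)‖ ≤
      2 * l2Norm (volume.restrict (unitPrism i (Ioi 0))) f * s ^ (-((n + 1) / 2) : ℝ) := by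
  have hint {φ : EuclideanSpace ℝ (Fin (n + 1)) → ℝ} (hφ : Continuous φ) :
      IntegrableOn φ (unitCube (Fin (n + 1))) :=
    integrableOn_of_continuous_of_isBounded hφ isBounded_unitCube
  have htranslate := setIntegral_unitCube_norm_comp_add_smul_le (x := x + v) hf hper hL2
    (by simpa [hv] using hx) hs
  have hfixed := setIntegral_unitCube_norm_comp_add_smul_le hf hper hL2 hx hs
  calc ∫ z in unitCube (Fin (n + 1)), ‖f (x + s • z + v) - f (x + s • z)‖
      ≤ ∫ z in unitCube (Fin (n + 1)), (‖f (x + v + s • z)‖ + ‖f (x + s • z)‖) :=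
        integral_mono (hint (by fun_prop)) (hint (by fun_prop)) fun z => by
          simpa only [add_right_comm x (s • z)] using norm_sub_le _ _
    _ = (∫ z in unitCube (Fin (n + 1)), ‖f (x + v + s • z)‖) +
          ∫ z in unitCube (Fin (n + 1)), ‖f (x + s • z)‖ :=
        integral_add (hint (by fun_prop)) (hint (by fun_prop))
    _ ≤ 2 * l2Norm (volume.restrict (unitPrism i (Ioi 0))) f * s ^ (-((n + 1) / 2) : ℝ) := by
        linarith

lemma setIntegral_unitCube_norm_translate_sub_le_fderiv [NormedSpace ℝ F] (hf : ContDiff ℝ 1 f)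
    (hper : PeriodicOff i f)
    (hL2 : MemLp (fderiv ℝ f) 2 (volume.restrict (unitPrism i (Ioi 0)))) (hx : 0 < x i)
    (hv : v i = 0) (hs : s ∈ Ioc 0 1) :
    ∫ z in unitCube (Fin (n + 1)), ‖f (x + s • z + v) - f (x + s • z)‖ ≤
      ‖v‖ * l2Norm (volume.restrict (unitPrism i (Ioi 0))) (fderiv ℝ f) *
        s ^ (-((n + 1) / 2) : ℝ) := by
  have hDf := hf.continuous_fderiv one_ne_zero
  have hpath : Continuous fun p : EuclideanSpace ℝ (Fin (n + 1)) × ℝ =>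
      ‖fderiv ℝ f (x + s • p.1 + p.2 • v)‖ := by fun_prop
  calc ∫ z in unitCube (Fin (n + 1)), ‖f (x + s • z + v) - f (x + s • z)‖
      ≤ ∫ z in unitCube (Fin (n + 1)), ‖v‖ * ∫ t in 0..1, ‖fderiv ℝ f (x + s • z + t • v)‖ := by
        refine integral_mono
          (integrableOn_of_continuous_of_isBounded ?_ isBounded_unitCube)
          (integrableOn_of_continuous_of_isBounded ?_ isBounded_unitCube) fun z => ?_
        · have := hf.continuous
          fun_prop
        · exact continuous_const.mul
            (intervalIntegral.continuous_parametric_intervalIntegral_of_continuous' hpath 0 1)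
        · simpa using norm_comp_add_smul_sub_le hf (x + s • z) v zero_le_one
    _ ≤ ‖v‖ * ∫ _ in (0 : ℝ)..1, l2Norm (volume.restrict (unitPrism i (Ioi 0))) (fderiv ℝ f) *
          s ^ (-((n + 1) / 2) : ℝ) := by
        rw [integral_const_mul]
        gcongr
        refine setIntegral_intervalIntegral_le hpath isBounded_unitCube zero_le_one
          intervalIntegrable_const fun t _ => ?_
        simpa only [add_right_comm x (s • _)] using
          setIntegral_unitCube_norm_comp_add_smul_le (x := x + t • v) hDf hper.fderiv hL2
            (by simpa [hv] using hx) hs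
    _ = ‖v‖ * l2Norm (volume.restrict (unitPrism i (Ioi 0))) (fderiv ℝ f) *
          s ^ (-((n + 1) / 2) : ℝ) := by
        simp [mul_assoc]

lemma setIntegral_unitCube_norm_translate_sub_le_min [NormedSpace ℝ F] (hf : ContDiff ℝ 1 f)
    (hper : PeriodicOff i f) (hL2 : MemLp f 2 (volume.restrict (unitPrism i (Ioi 0))))
    (hDL2 : MemLp (fderiv ℝ f) 2 (volume.restrict (unitPrism i (Ioi 0)))) (hx : 0 < x i)
    (hv : v i = 0) (hv2 : ‖v‖ ≤ 2) (hs : s ∈ Ioc 0 1) :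
    ∫ z in unitCube (Fin (n + 1)), ‖f (x + s • z + v) - f (x + s • z)‖ ≤
      2 * min (l2Norm (volume.restrict (unitPrism i (Ioi 0))) f)
        (l2Norm (volume.restrict (unitPrism i (Ioi 0))) (fderiv ℝ f)) *
          s ^ (-((n + 1) / 2) : ℝ) := by
  have hs0 : 0 ≤ s ^ (-((n + 1) / 2) : ℝ) := Real.rpow_nonneg hs.1.le _
  rw [mul_min_of_nonneg _ _ zero_le_two, min_mul_of_nonneg _ _ hs0]
  refine le_min (setIntegral_unitCube_norm_translate_sub_le hf.continuous hper hL2 hx hv hs)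
    ((setIntegral_unitCube_norm_translate_sub_le_fderiv hf hper hDL2 hx hv hs).trans ?_)
  have := l2Norm_nonneg (μ := volume.restrict (unitPrism i (Ioi 0))) (fderiv ℝ f)
  gcongr

lemma setIntegral_unitCube_translate_sub_eq_zero [NormedSpace ℝ F] (hf : Continuous f)
    (hper : PeriodicOff i f) (x : EuclideanSpace ℝ (Fin (n + 1))) (hv : v i = 0) :
    ∫ z in unitCube (Fin (n + 1)), (f (x + z + v) - f (x + z)) = 0 := by
  have hint {φ : EuclideanSpace ℝ (Fin (n + 1)) → F} (hφ : Continuous φ) :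
      IntegrableOn φ (unitCube (Fin (n + 1))) :=
    integrableOn_of_continuous_of_isBounded hφ isBounded_unitCube
  have htranslate := setIntegral_unitCube_comp_add (by fun_prop) (hper.comp_add_left x) hv
  simp only [← add_assoc, add_right_comm x v] at htranslate
  rw [integral_sub (hint (by fun_prop)) (hint (by fun_prop)), htranslate, sub_self]

end Translation

section TangentialOscillation

lemma fderiv_comp_add_right_sub {E F : Type*} [NormedAddCommGroup E] [NormedSpace ℝ E]
    [NormedAddCommGroup F] [NormedSpace ℝ F] {f : E → F} (hf : Differentiable ℝ f) (v : E) :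
    fderiv ℝ (fun y => f (y + v) - f y) = fun y => fderiv ℝ f (y + v) - fderiv ℝ f y := by
  ext1 y
  rw [fderiv_fun_sub (by fun_prop) (hf y), fderiv_comp_add_right]

variable {F : Type*} [NormedAddCommGroup F] [NormedSpace ℝ F] [CompleteSpace F] {i : Fin 3}
  {g : EuclideanSpace ℝ (Fin 3) → F} {x v : EuclideanSpace ℝ (Fin 3)}

lemma norm_tangential_translate_sub_le (hg : ContDiff ℝ 2 g) (hper : PeriodicOff i g)
    (hDg : MemLp (fderiv ℝ g) 2 (volume.restrict (unitPrism i (Ioi 0))))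
    (hDDg : MemLp (fderiv ℝ (fderiv ℝ g)) 2 (volume.restrict (unitPrism i (Ioi 0))))
    (hx : 0 < x i) (hv : v i = 0) (hv2 : ‖v‖ ≤ 2) :
    ‖g (x + v) - g x‖ ≤ 32 * √(l2Norm (volume.restrict (unitPrism i (Ioi 0))) (fderiv ℝ g)) *
      √(l2Norm (volume.restrict (unitPrism i (Ioi 0))) (fderiv ℝ (fderiv ℝ g))) := by
  set A := l2Norm (volume.restrict (unitPrism i (Ioi 0))) (fderiv ℝ g)
  set B := l2Norm (volume.restrict (unitPrism i (Ioi 0))) (fderiv ℝ (fderiv ℝ g))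
  have hDg_diff : ContDiff ℝ 1 (fderiv ℝ g) := hg.fderiv_right le_rfl
  let d (y : EuclideanSpace ℝ (Fin 3)) : F := g (y + v) - g y
  have hd : ContDiff ℝ 2 d := (hg.comp (contDiff_id.add contDiff_const)).sub hg
  have hDd : fderiv ℝ d = fun y => fderiv ℝ g (y + v) - fderiv ℝ g y :=
    fderiv_comp_add_right_sub (hg.differentiable two_ne_zero) v
  have hDDd : fderiv ℝ (fderiv ℝ d) =
      fun y => fderiv ℝ (fderiv ℝ g) (y + v) - fderiv ℝ (fderiv ℝ g) y := by
    rw [hDd, fderiv_comp_add_right_sub (hDg_diff.differentiable one_ne_zero) v]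
  have hA0 : 0 ≤ A := l2Norm_nonneg _
  have hB0 : 0 ≤ B := l2Norm_nonneg _
  have hexp : -(((2 : ℕ) + 1) / 2 : ℝ) = -(3 / 2) := by norm_num
  have hA (s : ℝ) (hs : s ∈ Ioc (0 : ℝ) 1) :
      ∫ z in unitCube (Fin 3), ‖fderiv ℝ d (x + s • z)‖ ≤ 2 * min A B * s ^ (-(3 / 2) : ℝ) := by
    rw [hDd, ← hexp]
    exact setIntegral_unitCube_norm_translate_sub_le_min hDg_diff hper.fderiv hDg hDDg hx hv hv2 hs
  have hB (s : ℝ) (hs : s ∈ Ioc (0 : ℝ) 1) :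
      ∫ z in unitCube (Fin 3), ‖fderiv ℝ (fderiv ℝ d) (x + s • z)‖ ≤
        2 * B * s ^ (-(3 / 2) : ℝ) := by
    rw [hDDd, ← hexp]
    exact setIntegral_unitCube_norm_translate_sub_le
      (hDg_diff.continuous_fderiv one_ne_zero) hper.fderiv.fderiv hDDg hx hv hs
  have hR (z : EuclideanSpace ℝ (Fin 3)) (hz : z ∈ unitCube (Fin 3)) : ‖z‖ ≤ 2 :=
    (norm_le_sqrt_card_of_mem_unitCube hz).trans
      (Real.sqrt_le_iff.2 ⟨zero_le_two, by norm_num⟩)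
  have hmean : ∫ z in unitCube (Fin 3), d (x + z) = 0 :=
    setIntegral_unitCube_translate_sub_eq_zero hg.continuous hper x hv
  calc ‖d x‖ ≤ 16 * √(2 * min A B) * √(2 * B) := by
        simpa [hmean] using norm_sub_setIntegral_comp_add_le_sqrt_mul_sqrt hd
          measurableSet_unitCube hR (by positivity)
          (mul_le_mul_of_nonneg_left (min_le_right A B) zero_le_two) hA hB
    _ = 32 * √(min A B) * √B := by
        rw [Real.sqrt_mul zero_le_two, Real.sqrt_mul zero_le_two]
        linear_combination 16 * √(min A B) * √B * Real.mul_self_sqrt zero_le_two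
    _ ≤ 32 * √A * √B := by
        gcongr
        exact min_le_left A B

end TangentialOscillation

section Trace

lemma sq_le_two_mul_integral_Ioi {u u' m : ℝ → ℝ} {a : ℝ} (hu : ∀ t, HasDerivAt u (u' t) t)
    (hu' : Continuous u') (hm : ∀ t, |u' t| ≤ m t) (hint : IntegrableOn (fun t => u t ^ 2) (Ioi a))
    (hint' : IntegrableOn (fun t => |u t| * m t) (Ioi a)) :
    u a ^ 2 ≤ 2 * ∫ t in Ioi a, |u t| * m t := by
  have hu_cont : Continuous u := continuous_iff_continuousAt.2 fun t => (hu t).continuousAt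
  have hderiv (t : ℝ) : HasDerivAt (fun t => u t ^ 2) (2 * (u t * u' t)) t := by
    simpa [mul_assoc] using (hu t).fun_pow 2
  have hbound (t : ℝ) : |u t * u' t| ≤ |u t| * m t := by
    rw [abs_mul]
    exact mul_le_mul_of_nonneg_left (hm t) (abs_nonneg _)
  have hprod : IntegrableOn (fun t => u t * u' t) (Ioi a) :=
    hint'.mono' (by fun_prop) (.of_forall hbound)
  have hlim := tendsto_zero_of_hasDerivAt_of_integrableOn_Ioi (fun t _ => hderiv t)
    (hprod.const_mul 2) hint
  have hftc := integral_Ioi_of_hasDerivAt_of_tendsto' (fun t _ => hderiv t)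
    (hprod.const_mul 2) hlim
  calc u a ^ 2 = -(2 * ∫ t in Ioi a, u t * u' t) := by
        rw [← integral_const_mul, hftc, zero_sub, neg_neg]
    _ ≤ 2 * |∫ t in Ioi a, u t * u' t| := by
        linarith [neg_abs_le (∫ t in Ioi a, u t * u' t)]
    _ ≤ 2 * ∫ t in Ioi a, |u t| * m t := by
        gcongr 2 * ?_
        exact norm_integral_le_of_norm_le (f := fun t => u t * u' t) hint' (.of_forall hbound)

variable {F : Type*} [NormedAddCommGroup F] [NormedSpace ℝ F]

lemma sq_norm_le_two_mul_integral_Ioi {f f' : ℝ → F} {m : ℝ → ℝ} {a : ℝ}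
    (hf : ∀ t, HasDerivAt f (f' t) t) (hf' : Continuous f') (hm : ∀ t, ‖f' t‖ ≤ m t)
    (hm_cont : Continuous m)
    (hint : IntegrableOn (fun t => ‖f t‖ ^ 2) (Ioi a))
    (hint' : IntegrableOn (fun t => ‖f t‖ * m t) (Ioi a)) :
    ‖f a‖ ^ 2 ≤ 2 * ∫ t in Ioi a, ‖f t‖ * m t := by
  obtain ⟨L, hL, hLa⟩ := exists_dual_vector'' ℝ (f a)
  have hf_cont : Continuous f := continuous_iff_continuousAt.2 fun t => (hf t).continuousAt
  have hm0 (t : ℝ) : 0 ≤ m t := (norm_nonneg _).trans (hm t)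
  have hLf (y : F) : |L y| ≤ ‖y‖ := by simpa using L.le_of_opNorm_le hL y
  have hLint : IntegrableOn (fun t => |L (f t)| * m t) (Ioi a) :=
    hint'.mono' (by fun_prop) (.of_forall fun t => by
      simpa [abs_of_nonneg (hm0 t)] using mul_le_mul_of_nonneg_right (hLf (f t)) (hm0 t))
  calc ‖f a‖ ^ 2 = L (f a) ^ 2 := by rw [hLa]; rfl
    _ ≤ 2 * ∫ t in Ioi a, |L (f t)| * m t :=
        sq_le_two_mul_integral_Ioi (fun t => L.hasFDerivAt.comp_hasDerivAt t (hf t))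
          (by fun_prop) (fun t => (hLf _).trans (hm t))
          (hint.mono' (by fun_prop) (.of_forall fun t => by
            simpa using pow_le_pow_left₀ (abs_nonneg _) (hLf (f t)) 2)) hLint
    _ ≤ 2 * ∫ t in Ioi a, ‖f t‖ * m t := by
        gcongr 2 * ?_
        exact integral_mono hLint hint' fun t => mul_le_mul_of_nonneg_right (hLf _) (hm0 t)

variable {n : ℕ} {i : Fin (n + 1)} {f : EuclideanSpace ℝ (Fin (n + 1)) → F} {t : ℝ}

lemma sq_norm_insertCoord_le_two_mul_integral_Ioi (hf : ContDiff ℝ 1 f)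
    {w : EuclideanSpace ℝ (Fin n)}
    (hint : IntegrableOn (fun s => ‖f (insertCoord i (s, w))‖ ^ 2) (Ioi t))
    (hint' : IntegrableOn
      (fun s => ‖f (insertCoord i (s, w))‖ * ‖fderiv ℝ f (insertCoord i (s, w))‖) (Ioi t)) :
    ‖f (insertCoord i (t, w))‖ ^ 2 ≤
      2 * ∫ s in Ioi t, ‖f (insertCoord i (s, w))‖ * ‖fderiv ℝ f (insertCoord i (s, w))‖ := by
  obtain ⟨p, hline⟩ : ∃ p, ∀ s, insertCoord i (s, w) = p + s • EuclideanSpace.single i 1 :=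
    ⟨insertCoord i (0, w), fun s => by
      rw [add_comm (insertCoord i (0, w)), smul_single_add_insertCoord, add_zero]⟩
  have := hf.continuous_fderiv one_ne_zero
  simp only [hline] at hint hint' ⊢
  refine sq_norm_le_two_mul_integral_Ioi
    (hasDerivAt_comp_add_smul (hf.differentiable one_ne_zero) _ _) (by fun_prop) (fun s => ?_)
    (by fun_prop) hint hint'
  simpa using (fderiv ℝ f _).le_opNorm (EuclideanSpace.single i 1)

lemma setIntegral_unitCube_sq_norm_insertCoord_le (hf : ContDiff ℝ 1 f)
    (hL2 : MemLp f 2 (volume.restrict (unitPrism i (Ioi t))))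
    (hDL2 : MemLp (fderiv ℝ f) 2 (volume.restrict (unitPrism i (Ioi t)))) :
    ∫ w in unitCube (Fin n), ‖f (insertCoord i (t, w))‖ ^ 2 ≤
      2 * ∫ y in unitPrism i (Ioi t), ‖f y‖ * ‖fderiv ℝ f y‖ := by
  have hsq : IntegrableOn (fun y => ‖f y‖ ^ 2) (unitPrism i (Ioi t)) :=
    (memLp_two_iff_integrable_sq_norm hf.continuous.aestronglyMeasurable).1 hL2
  have hprod : IntegrableOn (fun y => ‖f y‖ * ‖fderiv ℝ f y‖) (unitPrism i (Ioi t)) :=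
    hL2.norm.integrable_mul hDL2.norm
  rw [setIntegral_unitPrism hprod, ← integral_const_mul]
  rw [integrableOn_unitPrism_iff] at hsq hprod
  refine integral_mono_of_nonneg (.of_forall fun _ => sq_nonneg _)
    (hprod.integral_prod_right.const_mul 2) ?_
  filter_upwards [hsq.prod_left_ae, hprod.prod_left_ae] with w hw hw'
  exact sq_norm_insertCoord_le_two_mul_integral_Ioi hf hw hw'

lemma continuous_insertCoord_right (i : Fin (n + 1)) (t : ℝ) :
    Continuous fun w => insertCoord i (t, w) := by
  have hins : Continuous fun w : EuclideanSpace ℝ (Fin n) =>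
      (i.insertNth t w.ofLp : Fin (n + 1) → ℝ) :=
    continuous_const.finInsertNth (A := fun _ => ℝ) i (PiLp.continuous_ofLp 2 _)
  exact (PiLp.continuous_toLp 2 _).comp hins

lemma setIntegral_unitCube_norm_insertCoord_le (hf : ContDiff ℝ 1 f) (ht : 0 ≤ t)
    (hL2 : MemLp f 2 (volume.restrict (unitPrism i (Ioi 0))))
    (hDL2 : MemLp (fderiv ℝ f) 2 (volume.restrict (unitPrism i (Ioi 0)))) :
    ∫ w in unitCube (Fin n), ‖f (insertCoord i (t, w))‖ ≤
      √2 * √(l2Norm (volume.restrict (unitPrism i (Ioi 0))) f) *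
        √(l2Norm (volume.restrict (unitPrism i (Ioi 0))) (fderiv ℝ f)) := by
  have hsub : unitPrism i (Ioi t) ⊆ unitPrism i (Ioi 0) := unitPrism_mono i (Ioi_subset_Ioi ht)
  have hslice : Continuous fun w => f (insertCoord i (t, w)) :=
    hf.continuous.comp (continuous_insertCoord_right i t)
  have htrace : ∫ w in unitCube (Fin n), ‖f (insertCoord i (t, w))‖ ^ 2 ≤
      2 * (l2Norm (volume.restrict (unitPrism i (Ioi 0))) f *
        l2Norm (volume.restrict (unitPrism i (Ioi 0))) (fderiv ℝ f)) :=
    calc ∫ w in unitCube (Fin n), ‖f (insertCoord i (t, w))‖ ^ 2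
        ≤ 2 * ∫ y in unitPrism i (Ioi t), ‖f y‖ * ‖fderiv ℝ f y‖ :=
          setIntegral_unitCube_sq_norm_insertCoord_le hf
            (hL2.mono_measure (Measure.restrict_mono_set _ hsub))
            (hDL2.mono_measure (Measure.restrict_mono_set _ hsub))
      _ ≤ 2 * ∫ y in unitPrism i (Ioi 0), ‖f y‖ * ‖fderiv ℝ f y‖ := by
          gcongr 2 * ?_
          exact setIntegral_mono_set (hL2.norm.integrable_mul hDL2.norm)
            (.of_forall fun _ => by positivity) hsub.eventuallyLE
      _ ≤ _ := by
          gcongr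
          exact integral_norm_mul_norm_le_l2Norm_mul_l2Norm hL2 hDL2
  calc ∫ w in unitCube (Fin n), ‖f (insertCoord i (t, w))‖
      ≤ √(∫ w in unitCube (Fin n), ‖f (insertCoord i (t, w))‖ ^ 2) :=
        integral_norm_le_l2Norm
          (memLp_two_restrict_of_continuous_of_isBounded hslice isBounded_unitCube)
    _ ≤ _ := Real.sqrt_le_sqrt htrace
    _ = _ := by
        rw [Real.sqrt_mul zero_le_two, Real.sqrt_mul (l2Norm_nonneg _), mul_assoc]

end Trace

section SupNorm

variable {F : Type*} [NormedAddCommGroup F] [NormedSpace ℝ F] [CompleteSpace F] {i : Fin 3}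
  {g : EuclideanSpace ℝ (Fin 3) → F} {x : EuclideanSpace ℝ (Fin 3)}

lemma norm_le_setIntegral_norm_insertCoord_add (hg : ContDiff ℝ 2 g) (hper : PeriodicOff i g)
    (hDg : MemLp (fderiv ℝ g) 2 (volume.restrict (unitPrism i (Ioi 0))))
    (hDDg : MemLp (fderiv ℝ (fderiv ℝ g)) 2 (volume.restrict (unitPrism i (Ioi 0))))
    (hx : x ∈ unitPrism i (Ioi 0)) :
    ‖g x‖ ≤ (∫ w in unitCube (Fin 2), ‖g (insertCoord i (x i, w))‖) +
      32 * √(l2Norm (volume.restrict (unitPrism i (Ioi 0))) (fderiv ℝ g)) *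
        √(l2Norm (volume.restrict (unitPrism i (Ioi 0))) (fderiv ℝ (fderiv ℝ g))) := by
  set K := 32 * √(l2Norm (volume.restrict (unitPrism i (Ioi 0))) (fderiv ℝ g)) *
    √(l2Norm (volume.restrict (unitPrism i (Ioi 0))) (fderiv ℝ (fderiv ℝ g)))
  have hslice (w : EuclideanSpace ℝ (Fin 2)) (hw : w ∈ unitCube (Fin 2)) :
      ‖g x‖ ≤ ‖g (insertCoord i (x i, w))‖ + K := by
    have hv (j : Fin 3) : |(insertCoord i (x i, w) - x) j| ≤ 1 := by
      cases j using i.succAboveCases with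
      | x => simp
      | p j =>
        have hxj := hx.2 j
        have hwj := hw j
        simp only [PiLp.sub_apply, insertCoord_apply_succAbove]
        exact abs_le.2 ⟨by linarith [hxj.2, hwj.1], by linarith [hxj.1, hwj.2]⟩
    have hv2 : ‖insertCoord i (x i, w) - x‖ ≤ 2 :=
      (norm_le_sqrt_card_of_abs_le_one hv).trans (Real.sqrt_le_iff.2 ⟨zero_le_two, by norm_num⟩)
    have := norm_tangential_translate_sub_le hg hper hDg hDDg hx.1 (by simp) hv2
    rw [add_sub_cancel] at this
    linarith [norm_le_norm_add_norm_sub (g (insertCoord i (x i, w))) (g x)]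
  have hint : IntegrableOn (fun w => ‖g (insertCoord i (x i, w))‖) (unitCube (Fin 2)) :=
    integrableOn_of_continuous_of_isBounded
      (hg.continuous.comp (continuous_insertCoord_right i _)).norm isBounded_unitCube
  calc ‖g x‖ = ∫ _ in unitCube (Fin 2), ‖g x‖ := by simp
    _ ≤ ∫ w in unitCube (Fin 2), (‖g (insertCoord i (x i, w))‖ + K) :=
        setIntegral_mono_on (integrable_const _) (hint.add (integrable_const K))
          measurableSet_unitCube hslice
    _ = (∫ w in unitCube (Fin 2), ‖g (insertCoord i (x i, w))‖) + K := by
        rw [integral_add hint (integrable_const K)]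
        simp

end SupNorm

theorem stmt2_general {F : Type*} [NormedAddCommGroup F] [NormedSpace ℝ F] [CompleteSpace F]
    {g : E3 → F} (hg : ContDiff ℝ 2 g) (hper₁ : ∀ x, g (x + e 1) = g x)
    (hper₂ : ∀ x, g (x + e 2) = g x) (hL2 : IntegrableOn (fun x => ‖g x‖ ^ 2) Omega)
    (hDL2 : IntegrableOn (fun x => ‖fderiv ℝ g x‖ ^ 2) Omega)
    (hDDL2 : IntegrableOn (fun x => ‖fderiv ℝ (fderiv ℝ g) x‖ ^ 2) Omega) {x : E3}
    (hx : x ∈ Omega) :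
    ‖g x‖ ≤ √2 * √(√(∫ y in Omega, ‖g y‖ ^ 2)) * √(√(∫ y in Omega, ‖fderiv ℝ g y‖ ^ 2)) +
      32 * √(√(∫ y in Omega, ‖fderiv ℝ g y‖ ^ 2)) *
        √(√(∫ y in Omega, ‖fderiv ℝ (fderiv ℝ g) y‖ ^ 2)) := by
  have hper : PeriodicOff (n := 2) 0 g := by
    simpa [PeriodicOff, Fin.forall_fin_succ, Function.Periodic, e] using ⟨hper₁, hper₂⟩
  have hDg_diff : ContDiff ℝ 1 (fderiv ℝ g) := hg.fderiv_right le_rfl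
  rw [Omega_eq_unitPrism] at *
  have hg2 := memLp_two_restrict_of_continuous hg.continuous hL2
  have hDg2 := memLp_two_restrict_of_continuous hDg_diff.continuous hDL2
  have hDDg2 := memLp_two_restrict_of_continuous (hDg_diff.continuous_fderiv one_ne_zero) hDDL2
  exact (norm_le_setIntegral_norm_insertCoord_add hg hper hDg2 hDDg2 hx).trans
    (add_le_add_left (setIntegral_unitCube_norm_insertCoord_le (hg.of_le one_le_two) hx.1.le
      hg2 hDg2) _)

/-- Gagliardo–Nirenberg type inequality on `Ω = ℝ⁺ × 𝕋²`:
`‖g‖_{L^∞} ≤ √2 ‖g‖^{1/2} ‖∇g‖^{1/2} + C ‖∇g‖^{1/2} ‖∇²g‖^{1/2}`. -/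
theorem stmt2 : ∃ C > 0, ∀ g : E3 → ℝ,
    ContDiff ℝ 2 g →
    (∀ x : E3, g (x + e 1) = g x) → (∀ x : E3, g (x + e 2) = g x) →
    IntegrableOn (fun x => (g x) ^ 2) Omega →
    IntegrableOn (fun x => ‖fderiv ℝ g x‖ ^ 2) Omega →
    IntegrableOn (fun x => ‖fderiv ℝ (fderiv ℝ g) x‖ ^ 2) Omega →
    ∀ x ∈ Omega, |g x| ≤
      Real.sqrt 2 * Real.sqrt (Real.sqrt (∫ y in Omega, (g y) ^ 2))
        * Real.sqrt (Real.sqrt (∫ y in Omega, ‖fderiv ℝ g y‖ ^ 2))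
      + C * Real.sqrt (Real.sqrt (∫ y in Omega, ‖fderiv ℝ g y‖ ^ 2))
          * Real.sqrt (Real.sqrt (∫ y in Omega, ‖fderiv ℝ (fderiv ℝ g) y‖ ^ 2)) := by
  refine ⟨32, by norm_num, fun g hg hper₁ hper₂ hL2 hDL2 hDDL2 x hx => ?_⟩
  simpa using stmt2_general hg hper₁ hper₂ (by simpa using hL2) hDL2 hDDL2 hx
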